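/- Assume A is irreducible (for all i, j there exists k ≥ 1 with (A^k)_{ij} > 0) and A + Aᵀ is primitive (there exists k ≥ 1 such that all entries of (A + Aᵀ)^k are positive). Then there exists v ∈ ℝⁿ with f(v) = v, and, setting P = (1/2)·(diag(Aᵀe^v)^{−1} Aᵀ diag(e^v) + diag(Ae^{−v})^{−1} A diag(e^{−v})) and ρ₂ = max{|λ| : λ a complex eigenvalue of P, λ ≠ 1}, one has ρ₂ < 1 and for every x ∈ ℝⁿ there exists c ∈ ℝ such that limsup_{k→∞} ‖f^k(x) − v − c𝟙‖_∞^{1/k} ≤ ρ₂; in particular the fixed-point iteration p^{k+1} = f(p^k) converges linearly at rate ρ₂. -/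

import Mathlib

open BigOperators Filter Matrix

/-- The ideal HOTS map. -/
noncomputable def hotsMap {n : ℕ} (A : Matrix (Fin n) (Fin n) ℝ) (x : Fin n → ℝ) : Fin n → ℝ :=
  fun i => (1 / 2) * (Real.log (∑ j, A j i * Real.exp (x j))
    - Real.log (∑ j, A i j * Real.exp (-(x j))))

/-- The matrix `P = (1/2)(diag(Aᵀe^v)⁻¹ Aᵀ diag(e^v) + diag(Ae^{−v})⁻¹ A diag(e^{−v}))`. -/
noncomputable def hotsJacMatrix {n : ℕ} (A : Matrix (Fin n) (Fin n) ℝ) (v : Fin n → ℝ) :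
    Matrix (Fin n) (Fin n) ℝ :=
  (1 / 2 : ℝ) •
    ((Matrix.diagonal fun i => ∑ l, A l i * Real.exp (v l))⁻¹ * Aᵀ *
        Matrix.diagonal (fun j => Real.exp (v j)) +
      (Matrix.diagonal fun i => ∑ l, A i l * Real.exp (-(v l)))⁻¹ * A *
        Matrix.diagonal (fun j => Real.exp (-(v j))))

/-- `ρ₂ = max{|λ| : λ eigenvalue of P, λ ≠ 1}`. -/
noncomputable def secondEigRadius {n : ℕ} (P : Matrix (Fin n) (Fin n) ℝ) : ℝ :=
  sSup {r : ℝ | ∃ μ : ℂ, μ ∈ spectrum ℂ (P.map (Complex.ofReal)) ∧ μ ≠ 1 ∧ r = ‖μ‖}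


/-- Propagation along walks of the pattern of `B`. -/
lemma propagate {n : ℕ} (B : Matrix (Fin n) (Fin n) ℝ) (hB : ∀ i j, 0 ≤ B i j)
    (S : ℕ → Fin n → Prop)
    (hS : ∀ k i, S (k + 1) i → ∀ j, 0 < B i j → S k j) :
    ∀ k i j, S k i → 0 < (B ^ k) i j → S 0 j := by
  intro k
  induction k with
  | zero =>
    intro i j h h2
    by_cases hij : i = j
    · subst hij; exact h
    · simp [hij] at h2
  | succ k ih =>
    intro i j h h2
    have hk : ∀ k i j, 0 ≤ (B ^ k) i j := by
      intro k
      induction k with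
      | zero => intro i j; simp only [pow_zero, Matrix.one_apply]; split_ifs <;> norm_num
      | succ k ih =>
        intro i j
        rw [pow_succ, Matrix.mul_apply]
        exact Finset.sum_nonneg fun l _ => mul_nonneg (ih i l) (hB l j)
    rw [pow_succ', Matrix.mul_apply] at h2
    obtain ⟨l, -, hl⟩ := Finset.exists_lt_of_sum_lt (s := Finset.univ) (f := fun _ => (0:ℝ))
      (g := fun l => B i l * (B ^ k) l j) (by simpa using h2)
    have h1 : 0 < B i l := lt_of_le_of_ne (hB i l) (by rintro h; simp [← h] at hl)
    have h3 : 0 < (B ^ k) l j := lt_of_le_of_ne (hk k l j) (by rintro h; simp [← h] at hl)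
    exact ih l j (hS k i h l h1) h3

/-- Global convergence. -/
lemma global_conv {n : ℕ} (g : (Fin n → ℝ) → (Fin n → ℝ)) (hg : Continuous g)
    (hmono : Monotone g) (htr : ∀ z (t : ℝ), g (z + fun _ => t) = g z + fun _ => t)
    (h0 : g 0 = 0) (B : Matrix (Fin n) (Fin n) ℝ) (hB : ∀ i j, 0 ≤ B i j)
    (hstrict : ∀ x y, x ≤ y → ∀ i, g x i = g y i → ∀ j, 0 < B i j → x j = y j)
    (m : ℕ) (hm : ∀ i j, 0 < (B ^ m) i j) (z : Fin n → ℝ) :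
    ∃ c : ℝ, Tendsto (fun k => g^[k] z) atTop (nhds (fun _ => c)) := by
  rcases Nat.eq_zero_or_pos n with rfl | hn
  · exact ⟨0, by
      have : (fun k => g^[k] z) = fun _ => (fun _ => (0:ℝ)) := by
        funext k i; exact i.elim0
      rw [this]; exact tendsto_const_nhds⟩
  have : Nonempty (Fin n) := ⟨⟨0, hn⟩⟩
  have hconst : ∀ t : ℝ, g (fun _ => t) = fun _ => t := by
    intro t
    have := htr 0 t
    simpa [h0] using this
  have hle : ∀ (t : ℝ) (y : Fin n → ℝ), (∀ i, y i ≤ t) → ∀ k i, (g^[k] y) i ≤ t := by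
    intro t y hy k
    induction k with
    | zero => exact hy
    | succ k ih =>
      intro i
      rw [Function.iterate_succ_apply']
      have := hmono (show g^[k] y ≤ fun _ => t from ih) i
      rwa [hconst] at this
  have hge : ∀ (t : ℝ) (y : Fin n → ℝ), (∀ i, t ≤ y i) → ∀ k i, t ≤ (g^[k] y) i := by
    intro t y hy k
    induction k with
    | zero => exact hy
    | succ k ih =>
      intro i
      rw [Function.iterate_succ_apply']
      have := hmono (show (fun _ => t) ≤ g^[k] y from ih) i
      rwa [hconst] at this
  let M : (Fin n → ℝ) → ℝ := fun y => Finset.univ.sup' Finset.univ_nonempty y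
  have hMc : Continuous M := by
    have := Continuous.finset_sup'_apply (s := (Finset.univ : Finset (Fin n)))
      (f := fun i (y : Fin n → ℝ) => y i) Finset.univ_nonempty (fun i _ => continuous_apply i)
    exact this
  have hMle : ∀ y i, y i ≤ M y := fun y i => Finset.le_sup' y (Finset.mem_univ i)
  have hMex : ∀ y, ∃ i, M y = y i := fun y => by
    obtain ⟨i, -, hi⟩ := Finset.exists_mem_eq_sup' (Finset.univ_nonempty) y
    exact ⟨i, hi⟩
  have hanti : Antitone fun k => M (g^[k] z) := by
    refine antitone_nat_of_succ_le fun k => ?_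
    refine Finset.sup'_le _ _ fun i _ => ?_
    have := hle (M (g^[k] z)) (g^[k] z) (hMle _) 1 i
    rw [Function.iterate_succ_apply']
    simpa using this
  obtain ⟨a, ha⟩ : ∃ a : ℝ, ∀ i, a ≤ z i := by
    obtain ⟨i, hi⟩ := Finite.exists_min z
    exact ⟨z i, hi⟩
  have hbdd : BddBelow (Set.range fun k => M (g^[k] z)) := by
    refine ⟨a, ?_⟩
    rintro _ ⟨k, rfl⟩
    exact (hge a z ha k ⟨0, hn⟩).trans (hMle _ _)
  obtain ⟨c, hc⟩ : ∃ c, Tendsto (fun k => M (g^[k] z)) atTop (nhds c) :=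
    ⟨_, tendsto_atTop_ciInf hanti hbdd⟩
  refine ⟨c, ?_⟩
  have hcpt : IsCompact (Set.Icc (fun _ : Fin n => a) (fun _ => M z)) := isCompact_Icc
  obtain ⟨y, -, φ, hφ, hy⟩ := hcpt.tendsto_subseq (x := fun k => g^[k] z)
    (fun k => ⟨fun i => hge a z ha k i, fun i => hle _ z (hMle z) k i⟩)
  have hMy : M y = c :=
    tendsto_nhds_unique ((hMc.tendsto y).comp hy) (hc.comp hφ.tendsto_atTop)
  have hMgy : M (g^[m] y) = c := by
    have h1 := ((hMc.comp (hg.iterate m)).tendsto y).comp hy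
    have h2 : Tendsto (fun k => M (g^[m + φ k] z)) atTop (nhds c) :=
      hc.comp (tendsto_atTop_mono (fun k => Nat.le_add_left (φ k) m) hφ.tendsto_atTop)
    refine tendsto_nhds_unique h1 (h2.congr fun k => ?_)
    simp [Function.iterate_add_apply]
  have hyc : ∀ i, y i ≤ c := fun i => hMy ▸ hMle y i
  obtain ⟨i0, hi0⟩ := hMex (g^[m] y)
  have hall : ∀ j, y j = c := by
    intro j
    refine propagate B hB (fun k i => (g^[k] y) i = c) ?_ m i0 j (hi0.symm.trans hMgy)
      (hm i0 j)
    intro k i hi j hj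
    rw [Function.iterate_succ_apply'] at hi
    refine hstrict (g^[k] y) (fun _ => c) (fun l => hle c y hyc k l) i ?_ j hj
    rw [hi, hconst]
  have hyeq : y = fun _ => c := funext hall
  rw [hyeq] at hy
  rw [Metric.tendsto_atTop] at hy ⊢
  intro ε hε
  obtain ⟨N, hN⟩ := hy (ε / 2) (by linarith)
  have hN' := hN N le_rfl
  rw [dist_pi_lt_iff (by linarith)] at hN'
  refine ⟨φ N, fun k hk => ?_⟩
  obtain ⟨l, rfl⟩ := Nat.exists_eq_add_of_le' hk
  refine lt_of_le_of_lt ((dist_pi_le_iff (by linarith : (0:ℝ) ≤ ε / 2)).2 fun i => ?_)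
    (by linarith : ε / 2 < ε)
  rw [Function.iterate_add_apply, Real.dist_eq, abs_le]
  have hb : ∀ i, c - ε / 2 ≤ (g^[φ N] z) i ∧ (g^[φ N] z) i ≤ c + ε / 2 := by
    intro i
    have := hN' i
    simp only [Function.comp, Real.dist_eq] at this
    rw [abs_lt] at this
    constructor <;> linarith
  have h1 := hge _ _ (fun i => (hb i).1) l i
  have h2 := hle _ _ (fun i => (hb i).2) l i
  constructor <;> linarith

/-- A real eigenvector of a primitive stochastic matrix with eigenvalue of modulus at least 1 is
constant. -/
lemma eig_const {n : ℕ} (P B : Matrix (Fin n) (Fin n) ℝ) (hP : ∀ i j, 0 ≤ P i j)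
    (hrow : ∀ i, ∑ j, P i j = 1) (hB : ∀ i j, 0 ≤ B i j)
    (hBP : ∀ i j, 0 < B i j → 0 < P i j)
    (m : ℕ) (hm : ∀ i j, 0 < (B ^ m) i j) (lam : ℝ) (hlam : 1 ≤ |lam|) (x : Fin n → ℝ)
    (hx : P *ᵥ x = lam • x) : ∃ t, ∀ i, x i = t := by
  rcases Nat.eq_zero_or_pos n with rfl | hn
  · exact ⟨0, fun i => i.elim0⟩
  have : Nonempty (Fin n) := ⟨⟨0, hn⟩⟩
  obtain ⟨i0, hi0⟩ := Finite.exists_max (fun i => |x i|)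
  obtain ⟨σ, hσ, hσl⟩ : ∃ σ : ℝ, (σ = 1 ∨ σ = -1) ∧ lam = |lam| * σ := by
    rcases le_total 0 lam with h | h
    · exact ⟨1, Or.inl rfl, by rw [abs_of_nonneg h]; ring⟩
    · exact ⟨-1, Or.inr rfl, by rw [abs_of_nonpos h]; ring⟩
  have hσp : ∀ k, σ ^ k = 1 ∨ σ ^ k = -1 := by
    intro k
    rcases hσ with rfl | rfl
    · simp
    · exact neg_one_pow_eq_or ℝ k
  obtain ⟨τ, hτ, hτx⟩ : ∃ τ : ℝ, (τ = 1 ∨ τ = -1) ∧ τ * (σ ^ m * x i0) = |x i0| := by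
    rcases hσp m with h | h <;> rcases le_total 0 (x i0) with h' | h'
    · exact ⟨1, Or.inl rfl, by rw [h, abs_of_nonneg h']; ring⟩
    · exact ⟨-1, Or.inr rfl, by rw [h, abs_of_nonpos h']; ring⟩
    · exact ⟨-1, Or.inr rfl, by rw [h, abs_of_nonneg h']; ring⟩
    · exact ⟨1, Or.inl rfl, by rw [h, abs_of_nonpos h']; ring⟩
  set M := |x i0| with hM
  have hM0 : 0 ≤ M := abs_nonneg _
  have hbd : ∀ k i, τ * (σ ^ k * x i) ≤ M := by
    intro k i
    refine le_trans (le_abs_self _) (le_trans (le_of_eq ?_) (hi0 i))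
    rcases hσp k with h | h <;> rcases hτ with h' | h' <;> simp [h, h']
  have hall : ∀ j, τ * (σ ^ 0 * x j) = M := by
    intro j
    refine propagate B hB (fun k i => τ * (σ ^ k * x i) = M) ?_ m i0 j hτx (hm i0 j)
    intro k i hi j hj
    by_contra hne
    have hlt : τ * (σ ^ k * x j) < M := lt_of_le_of_ne (hbd k j) hne
    have h1 : ∑ l, P i l * (τ * (σ ^ k * x l)) < ∑ l, P i l * M := by
      refine Finset.sum_lt_sum (fun l _ => mul_le_mul_of_nonneg_left (hbd k l) (hP i l))
        ⟨j, Finset.mem_univ j, mul_lt_mul_of_pos_left hlt (hBP i j hj)⟩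
    rw [← Finset.sum_mul, hrow, one_mul] at h1
    have h2 : ∑ l, P i l * (τ * (σ ^ k * x l)) = τ * σ ^ k * (P *ᵥ x) i := by
      simp only [Matrix.mulVec, dotProduct, Finset.mul_sum]
      exact Finset.sum_congr rfl fun l _ => by ring
    rw [h2, hx, Pi.smul_apply, smul_eq_mul, hσl] at h1
    have h3 : τ * σ ^ k * (|lam| * σ * x i) = |lam| * (τ * (σ ^ (k + 1) * x i)) := by ring
    rw [h3, hi] at h1
    nlinarith
  refine ⟨τ * M, fun i => ?_⟩
  have := hall i
  rcases hτ with h | h <;> rw [h] at this ⊢ <;> simp at this ⊢ <;> linarith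

lemma exists_eigvec {n : ℕ} (P : Matrix (Fin n) (Fin n) ℂ) (μ : ℂ) :
    μ ∈ spectrum ℂ P ↔ ∃ x : Fin n → ℂ, x ≠ 0 ∧ P *ᵥ x = μ • x := by
  rw [← Matrix.spectrum_toLin', ← Module.End.hasEigenvalue_iff_mem_spectrum]
  constructor
  · intro h
    obtain ⟨x, hx⟩ := h.exists_hasEigenvector
    exact ⟨x, hx.2, by simpa using hx.apply_eq_smul⟩
  · rintro ⟨x, hx, h⟩
    exact Module.End.hasEigenvalue_of_hasEigenvector (x := x)
      ⟨Module.End.mem_eigenspace_iff.2 (by simpa using h), hx⟩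

lemma real_eig {n : ℕ} (P : Matrix (Fin n) (Fin n) ℝ) (d : Fin n → ℝ) (hd : ∀ i, 0 < d i)
    (hsym : ∀ i j, d i * P i j = d j * P j i) (μ : ℂ)
    (hμ : μ ∈ spectrum ℂ (P.map Complex.ofReal)) :
    ∃ lam : ℝ, μ = lam ∧ ∃ x : Fin n → ℝ, x ≠ 0 ∧ P *ᵥ x = lam • x := by
  obtain ⟨x, hx, hPx⟩ := (exists_eigvec _ _).1 hμ
  have hcomp : ∀ i, ∑ j, (P i j : ℂ) * x j = μ * x i := fun i => by
    have := congrFun hPx i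
    simpa [Matrix.mulVec, dotProduct] using this
  have hq : ∑ i, ∑ j, ((d i * P i j : ℝ) : ℂ) * (star (x i) * x j)
      = μ * ∑ i, ((d i * ‖x i‖ ^ 2 : ℝ) : ℂ) := by
    rw [Finset.mul_sum]
    refine Finset.sum_congr rfl fun i _ => ?_
    have : ∑ j, ((d i * P i j : ℝ) : ℂ) * (star (x i) * x j)
        = d i * star (x i) * ∑ j, (P i j : ℂ) * x j := by
      rw [Finset.mul_sum]
      exact Finset.sum_congr rfl fun j _ => by push_cast; ring
    rw [this, hcomp]
    have h2 : star (x i) * x i = ((‖x i‖ ^ 2 : ℝ) : ℂ) := by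
      rw [mul_comm]; push_cast; exact Complex.mul_conj' (x i)
    calc (d i : ℂ) * star (x i) * (μ * x i) = μ * (d i * (star (x i) * x i)) := by ring
      _ = _ := by rw [h2]; push_cast; ring
  have hreal : star (∑ i, ∑ j, ((d i * P i j : ℝ) : ℂ) * (star (x i) * x j))
      = ∑ i, ∑ j, ((d i * P i j : ℝ) : ℂ) * (star (x i) * x j) := by
    rw [star_sum]
    simp_rw [star_sum]
    rw [Finset.sum_comm]
    refine Finset.sum_congr rfl fun i _ => Finset.sum_congr rfl fun j _ => ?_
    rw [star_mul', star_mul', star_star, hsym j i]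
    have : star (((d i * P i j : ℝ) : ℂ)) = ((d i * P i j : ℝ) : ℂ) := Complex.conj_ofReal _
    rw [this]; ring
  have hpos : 0 < ∑ i, d i * ‖x i‖ ^ 2 := by
    obtain ⟨i, hi⟩ := Function.ne_iff.1 hx
    refine Finset.sum_pos' (fun i _ => by have := hd i; positivity) ⟨i, Finset.mem_univ i, ?_⟩
    have := hd i
    have : 0 < ‖x i‖ := norm_pos_iff.2 hi
    positivity
  rw [hq, ← Complex.ofReal_sum, star_mul'] at hreal
  have hs : star ((∑ i, d i * ‖x i‖ ^ 2 : ℝ) : ℂ) = ((∑ i, d i * ‖x i‖ ^ 2 : ℝ) : ℂ) :=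
    Complex.conj_ofReal _
  rw [hs] at hreal
  have hμr : star μ = μ := mul_right_cancel₀ (by exact_mod_cast hpos.ne') hreal
  obtain ⟨lam, hlam⟩ : ∃ r : ℝ, μ = r := by
    have := Complex.conj_eq_iff_real.1 hμr
    exact this
  refine ⟨lam, hlam, ?_⟩
  subst hlam
  by_cases hre : (fun i => (x i).re) = 0
  · refine ⟨fun i => (x i).im, ?_, ?_⟩
    · intro him
      apply hx
      funext i
      exact Complex.ext (congrFun hre i) (congrFun him i)
    · funext i
      have := congrArg Complex.im (hcomp i)
      simpa [Matrix.mulVec, dotProduct] using this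
  · refine ⟨fun i => (x i).re, hre, ?_⟩
    funext i
    have := congrArg Complex.re (hcomp i)
    simpa [Matrix.mulVec, dotProduct] using this

lemma mem_spec_of_real {n : ℕ} (P : Matrix (Fin n) (Fin n) ℝ) (lam : ℝ) (x : Fin n → ℝ)
    (hx : x ≠ 0) (h : P *ᵥ x = lam • x) :
    (lam : ℂ) ∈ spectrum ℂ (P.map Complex.ofReal) := by
  rw [exists_eigvec]
  refine ⟨fun i => (x i : ℂ), ?_, ?_⟩
  · intro h0
    apply hx
    funext i
    have := congrFun h0 i
    simpa using this
  · funext i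
    have := congrFun h i
    simp only [Matrix.mulVec, dotProduct, Pi.smul_apply, smul_eq_mul, Matrix.map_apply] at this ⊢
    exact_mod_cast congrArg Complex.ofReal this

lemma spec_lt_one {n : ℕ} (P B : Matrix (Fin n) (Fin n) ℝ) (hP : ∀ i j, 0 ≤ P i j)
    (hrow : ∀ i, ∑ j, P i j = 1) (hB : ∀ i j, 0 ≤ B i j)
    (hBP : ∀ i j, 0 < B i j → 0 < P i j)
    (m : ℕ) (hm : ∀ i j, 0 < (B ^ m) i j)
    (d : Fin n → ℝ) (hd : ∀ i, 0 < d i)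
    (hsym : ∀ i j, d i * P i j = d j * P j i) (μ : ℂ)
    (hμ : μ ∈ spectrum ℂ (P.map Complex.ofReal)) (h1 : μ ≠ 1) : ‖μ‖ < 1 := by
  obtain ⟨lam, rfl, x, hx, hPx⟩ := real_eig P d hd hsym μ hμ
  by_contra hcon
  rw [not_lt, Complex.norm_real, Real.norm_eq_abs] at hcon
  obtain ⟨t, ht⟩ := eig_const P B hP hrow hB hBP m hm lam hcon x hPx
  apply h1
  obtain ⟨i, hi⟩ := Function.ne_iff.1 hx
  have h2 := congrFun hPx i
  simp only [Matrix.mulVec, dotProduct, Pi.smul_apply, smul_eq_mul, ht, ← Finset.sum_mul,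
    hrow] at h2
  have ht0 : t ≠ 0 := by rw [← ht i]; exact hi
  have : lam = 1 := mul_right_cancel₀ ht0 h2.symm
  rw [this]; simp

lemma eigset_finite {n : ℕ} (P : Matrix (Fin n) (Fin n) ℝ) :
    {r : ℝ | ∃ μ : ℂ, μ ∈ spectrum ℂ (P.map (Complex.ofReal)) ∧ μ ≠ 1 ∧ r = ‖μ‖}.Finite := by
  refine ((Matrix.finite_spectrum (P.map Complex.ofReal)).image (fun μ : ℂ => ‖μ‖)).subset ?_
  rintro r ⟨μ, h, -, rfl⟩
  exact ⟨μ, h, rfl⟩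

lemma radius_nonneg {n : ℕ} (P : Matrix (Fin n) (Fin n) ℝ) : 0 ≤ secondEigRadius P := by
  refine Real.sSup_nonneg ?_
  rintro r ⟨μ, -, -, rfl⟩
  exact norm_nonneg _

lemma radius_lt_one {n : ℕ} (P B : Matrix (Fin n) (Fin n) ℝ) (hP : ∀ i j, 0 ≤ P i j)
    (hrow : ∀ i, ∑ j, P i j = 1) (hB : ∀ i j, 0 ≤ B i j)
    (hBP : ∀ i j, 0 < B i j → 0 < P i j)
    (m : ℕ) (hm : ∀ i j, 0 < (B ^ m) i j)
    (d : Fin n → ℝ) (hd : ∀ i, 0 < d i)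
    (hsym : ∀ i j, d i * P i j = d j * P j i) : secondEigRadius P < 1 := by
  unfold secondEigRadius
  rcases Set.eq_empty_or_nonempty
    {r : ℝ | ∃ μ : ℂ, μ ∈ spectrum ℂ (P.map (Complex.ofReal)) ∧ μ ≠ 1 ∧ r = ‖μ‖} with h | h
  · rw [h, Real.sSup_empty]; norm_num
  · rw [(eigset_finite P).csSup_lt_iff h]
    rintro r ⟨μ, h2, h3, rfl⟩
    exact spec_lt_one P B hP hrow hB hBP m hm d hd hsym μ h2 h3

/-- Weighted Euclidean norm. -/
noncomputable def wN {n : ℕ} (d w : Fin n → ℝ) : ℝ :=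
  ‖(WithLp.toLp 2 (fun i => √(d i) * w i) : EuclideanSpace ℝ (Fin n))‖

lemma wN_contract {n : ℕ} (P B : Matrix (Fin n) (Fin n) ℝ) (hP : ∀ i j, 0 ≤ P i j)
    (hrow : ∀ i, ∑ j, P i j = 1) (hB : ∀ i j, 0 ≤ B i j)
    (hBP : ∀ i j, 0 < B i j → 0 < P i j)
    (m : ℕ) (hm : ∀ i j, 0 < (B ^ m) i j)
    (d : Fin n → ℝ) (hd : ∀ i, 0 < d i)
    (hsym : ∀ i j, d i * P i j = d j * P j i) (w : Fin n → ℝ) (hw : ∑ i, d i * w i = 0) :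
    wN d (P *ᵥ w) ≤ secondEigRadius P * wN d w := by
  have hs : ∀ i, 0 < √(d i) := fun i => Real.sqrt_pos.2 (hd i)
  have hss : ∀ i, √(d i) * √(d i) = d i := fun i => Real.mul_self_sqrt (hd i).le
  set s : Fin n → ℝ := fun i => √(d i) with hsdef
  let H : Matrix (Fin n) (Fin n) ℝ := Matrix.of fun i j => s i * P i j / s j
  have hH : H.IsHermitian := by
    ext i j
    simp only [H, Matrix.conjTranspose_apply, Matrix.of_apply, star_trivial]
    rw [div_eq_div_iff (hs i).ne' (hs j).ne']
    have h1 := hsym i j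
    have h2 : √(d i) * √(d i) * P i j = √(d j) * √(d j) * P j i := by
      rw [hss i, hss j]; exact h1
    simp only [hsdef]
    linarith
  have hHT : ∀ i j, H i j = H j i := fun i j => by
    have := hH.apply i j
    simpa using this.symm
  let b := hH.eigenvectorBasis
  set u : EuclideanSpace ℝ (Fin n) := WithLp.toLp 2 (fun i => s i * w i) with hu
  set u' : EuclideanSpace ℝ (Fin n) := WithLp.toLp 2 (fun i => s i * (P *ᵥ w) i) with hu'
  have hu'H : ∀ i, u' i = ∑ j, H i j * u j := by
    intro i
    simp only [hu', hu, H, Matrix.mulVec, dotProduct, Matrix.of_apply, Finset.mul_sum]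
    refine Finset.sum_congr rfl fun j _ => ?_
    have := (hs j).ne'
    simp only [hsdef] at this ⊢
    field_simp
  have heig : ∀ k i, ∑ j, H i j * b k j = hH.eigenvalues k * b k i := by
    intro k i
    have := congrFun (hH.mulVec_eigenvectorBasis k) i
    simpa [Matrix.mulVec, dotProduct, b] using this
  have hinner : ∀ k, inner ℝ (b k) u' = hH.eigenvalues k * inner ℝ (b k) u := by
    intro k
    simp only [PiLp.inner_apply, RCLike.inner_apply, conj_trivial]
    simp only [hu'H, Finset.sum_mul, Finset.mul_sum]
    rw [Finset.sum_comm]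
    refine Finset.sum_congr rfl fun j _ => ?_
    have := heig k j
    calc ∑ i, H i j * u j * b k i = u j * ∑ i, H j i * b k i := by
          rw [Finset.mul_sum]
          exact Finset.sum_congr rfl fun i _ => by rw [hHT i j]; ring
      _ = _ := by rw [this]; ring
  have hterm : ∀ k, ‖inner ℝ (b k) u'‖ ^ 2 ≤ secondEigRadius P ^ 2 * ‖inner ℝ (b k) u‖ ^ 2 := by
    intro k
    rw [hinner, norm_mul, mul_pow]
    let x : Fin n → ℝ := fun i => b k i / s i
    have hbx : ∀ i, b k i = s i * x i := fun i => by
      have := (hs i).ne'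
      simp only [x, hsdef] at this ⊢
      field_simp
    have hx0 : x ≠ 0 := by
      intro h
      apply b.toBasis.ne_zero k
      ext i
      simp [hbx i, h]
    have hPx : P *ᵥ x = hH.eigenvalues k • x := by
      funext i
      have h1 := heig k i
      simp only [Matrix.mulVec, dotProduct, Pi.smul_apply, smul_eq_mul]
      apply mul_left_cancel₀ (hs i).ne'
      rw [Finset.mul_sum]
      calc ∑ j, √(d i) * (P i j * x j) = ∑ j, H i j * b k j := by
            refine Finset.sum_congr rfl fun j _ => ?_
            rw [hbx j]
            have := (hs j).ne'
            simp only [H, Matrix.of_apply, hsdef] at this ⊢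
            field_simp
        _ = _ := by rw [h1, hbx i]; ring
    by_cases hk : 1 ≤ |hH.eigenvalues k|
    · obtain ⟨t, ht⟩ := eig_const P B hP hrow hB hBP m hm _ hk x hPx
      have : inner ℝ (b k) u = 0 := by
        simp only [PiLp.inner_apply, RCLike.inner_apply, conj_trivial]
        calc ∑ i, u i * b k i = t * ∑ i, d i * w i := by
              rw [Finset.mul_sum]
              refine Finset.sum_congr rfl fun i _ => ?_
              rw [hbx i, ht i, ← hss i]
              simp only [hu, hsdef]; ring
          _ = 0 := by rw [hw, mul_zero]
      simp [this]
    · refine mul_le_mul_of_nonneg_right ?_ (by positivity)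
      refine pow_le_pow_left₀ (norm_nonneg _) ?_ 2
      refine le_csSup (eigset_finite P).bddAbove ⟨(hH.eigenvalues k : ℂ),
        mem_spec_of_real P _ x hx0 hPx, ?_, by rw [Complex.norm_real]⟩
      intro h
      apply hk
      have : hH.eigenvalues k = 1 := by exact_mod_cast h
      rw [this]; simp
  have hsq : ‖u'‖ ^ 2 ≤ (secondEigRadius P * ‖u‖) ^ 2 := by
    rw [mul_pow, ← b.sum_sq_norm_inner_right u', ← b.sum_sq_norm_inner_right u, Finset.mul_sum]
    exact Finset.sum_le_sum fun k _ => hterm k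
  exact le_of_sq_le_sq hsq (mul_nonneg (radius_nonneg P) (norm_nonneg _))

lemma limsup_root_le (a : ℕ → ℝ) (ha : ∀ k, 0 ≤ a k) (ρ : ℝ) (hρ : 0 ≤ ρ)
    (h : ∀ r, ρ < r → ∃ C : ℝ, ∀ᶠ k in atTop, a k ≤ C * r ^ k) :
    limsup (fun k : ℕ => a k ^ (1 / (k : ℝ))) atTop ≤ ρ := by
  refine le_of_forall_pos_le_add fun ε hε => ?_
  obtain ⟨C, hC⟩ := h (ρ + ε / 2) (by linarith)
  set r := ρ + ε / 2 with hr
  have hr0 : 0 < r := by linarith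
  have hlim : Tendsto (fun k : ℕ => (max C 1) ^ (1 / (k : ℝ)) * r) atTop (nhds r) := by
    have h1 : Tendsto (fun k : ℕ => (1 / (k : ℝ))) atTop (nhds 0) :=
      tendsto_one_div_atTop_nhds_zero_nat
    have h2 := (Real.continuousAt_const_rpow (a := max C 1) (b := 0) (by positivity)).tendsto.comp h1
    have h3 := h2.mul_const r
    simpa using h3
  have hev := hlim.eventually_lt_const (show r < ρ + ε by linarith)
  refine limsup_le_of_le ?_ ?_
  · exact IsCoboundedUnder.of_frequently_ge (a := 0)
      (Frequently.of_forall fun k => Real.rpow_nonneg (ha k) _)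
  · filter_upwards [hC, hev, eventually_ge_atTop 1] with k h1 h2 h3
    have hk : (k : ℝ) ≠ 0 := by positivity
    refine le_trans ?_ h2.le
    calc a k ^ (1 / (k : ℝ)) ≤ (max C 1 * r ^ k) ^ (1 / (k : ℝ)) := by
          refine Real.rpow_le_rpow (ha k) (h1.trans ?_) (by positivity)
          exact mul_le_mul_of_nonneg_right (le_max_left _ _) (by positivity)
      _ = _ := by
          rw [Real.mul_rpow (by positivity) (by positivity), ← Real.rpow_natCast r k,
            ← Real.rpow_mul hr0.le, mul_one_div_cancel hk, Real.rpow_one]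

lemma wN_le {n : ℕ} (d w : Fin n → ℝ) (hd : ∀ i, 0 < d i) : wN d w ≤ √(∑ i, d i) * ‖w‖ := by
  unfold wN
  rw [EuclideanSpace.norm_eq]
  have h : √(∑ i, d i) * ‖w‖ = √((∑ i, d i) * ‖w‖ ^ 2) := by
    rw [Real.sqrt_mul (Finset.sum_nonneg fun i _ => (hd i).le), Real.sqrt_sq (norm_nonneg _)]
  rw [h]
  refine Real.sqrt_le_sqrt ?_
  rw [Finset.sum_mul]
  refine Finset.sum_le_sum fun i _ => ?_
  simp only [norm_mul, mul_pow, Real.norm_eq_abs, sq_abs, Real.sq_sqrt (hd i).le]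
  refine mul_le_mul_of_nonneg_left ?_ (hd i).le
  rw [← sq_abs]
  exact pow_le_pow_left₀ (abs_nonneg _) (norm_le_pi_norm w i) 2

lemma le_wN {n : ℕ} (d w : Fin n → ℝ) (hd : ∀ i, 0 < d i) :
    ‖w‖ ≤ (∑ i, (√(d i))⁻¹) * wN d w := by
  have hN : 0 ≤ wN d w := norm_nonneg _
  have hs : ∀ i, 0 < √(d i) := fun i => Real.sqrt_pos.2 (hd i)
  have hpos : ∀ i, 0 < (√(d i))⁻¹ := fun i => inv_pos.2 (hs i)
  refine (pi_norm_le_iff_of_nonneg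
    (mul_nonneg (Finset.sum_nonneg fun i _ => (hpos i).le) hN)).2 fun i => ?_
  have h1 : ‖√(d i) * w i‖ ≤ wN d w :=
    PiLp.norm_apply_le (WithLp.toLp 2 (fun i => √(d i) * w i) : EuclideanSpace ℝ (Fin n)) i
  rw [norm_mul, Real.norm_of_nonneg (hs i).le] at h1
  calc ‖w i‖ = (√(d i))⁻¹ * (√(d i) * ‖w i‖) := by rw [inv_mul_cancel_left₀ (hs i).ne']
    _ ≤ (√(d i))⁻¹ * wN d w := mul_le_mul_of_nonneg_left h1 (hpos i).le
    _ ≤ _ := mul_le_mul_of_nonneg_right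
      (Finset.single_le_sum (f := fun i => (√(d i))⁻¹) (fun j _ => (hpos j).le)
        (Finset.mem_univ i)) hN

lemma wN_add {n : ℕ} (d w w' : Fin n → ℝ) : wN d (w + w') ≤ wN d w + wN d w' := by
  unfold wN
  refine le_trans (le_of_eq ?_) (norm_add_le _ _)
  congr 1
  ext i
  simp [mul_add]

lemma rate {n : ℕ} (g : (Fin n → ℝ) → (Fin n → ℝ))
    (hmono : Monotone g) (htr : ∀ z (t : ℝ), g (z + fun _ => t) = g z + fun _ => t)
    (h0 : g 0 = 0) (z : Fin n → ℝ) (c : ℝ)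
    (hc : Tendsto (fun k => g^[k] z) atTop (nhds (fun _ => c)))
    (P : Matrix (Fin n) (Fin n) ℝ) (hrow : ∀ i, ∑ j, P i j = 1)
    (d : Fin n → ℝ) (hd : ∀ i, 0 < d i)
    (hsym : ∀ i j, d i * P i j = d j * P j i) (ρ : ℝ) (hρ : 0 ≤ ρ)
    (hcontr : ∀ w, ∑ i, d i * w i = 0 → wN d (P *ᵥ w) ≤ ρ * wN d w)
    (hder : (fun w => g w - P *ᵥ w) =o[nhds 0] (fun w => w))
    (r : ℝ) (hr : ρ < r) :
    ∃ C : ℝ, ∀ᶠ k in atTop, ‖g^[k] z - fun _ => c‖ ≤ C * r ^ k := by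
  rcases Nat.eq_zero_or_pos n with rfl | hn
  · refine ⟨0, Eventually.of_forall fun k => ?_⟩
    have : (g^[k] z - fun _ => c) = 0 := by funext i; exact i.elim0
    rw [this]; simp
  have : Nonempty (Fin n) := ⟨⟨0, hn⟩⟩
  have hr0 : 0 < r := lt_of_le_of_lt hρ hr
  have hconst : ∀ t : ℝ, g (fun _ => t) = fun _ => t := by
    intro t
    have := htr 0 t
    simpa [h0] using this
  set D := ∑ i, d i with hD
  have hDpos : 0 < D := Finset.sum_pos (fun i _ => hd i) Finset.univ_nonempty
  let a : (Fin n → ℝ) → ℝ := fun w => (∑ i, d i * w i) / D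
  let Q : (Fin n → ℝ) → (Fin n → ℝ) := fun w => w - fun _ => a w
  have ha_add : ∀ w w', a (w + w') = a w + a w' := by
    intro w w'
    simp only [a, Pi.add_apply, mul_add, Finset.sum_add_distrib, add_div]
  have ha_const : ∀ t : ℝ, a (fun _ => t) = t := by
    intro t
    simp only [a, ← Finset.sum_mul]
    rw [← hD]; field_simp
  have hac : Continuous a := by fun_prop
  have hQc : Continuous Q := by fun_prop
  have haP : ∀ w, a w = 0 → a (P *ᵥ w) = 0 := by
    intro w hw
    have : ∑ i, d i * (P *ᵥ w) i = ∑ i, d i * w i := by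
      simp only [Matrix.mulVec, dotProduct, Finset.mul_sum]
      rw [Finset.sum_comm]
      refine Finset.sum_congr rfl fun j _ => ?_
      calc ∑ i, d i * (P i j * w j) = (d j * w j) * ∑ i, P j i := by
            rw [Finset.mul_sum]
            refine Finset.sum_congr rfl fun i _ => ?_
            linear_combination w j * hsym i j
        _ = _ := by rw [hrow, mul_one]
    simp only [a] at hw ⊢
    rw [this, hw]
  have haQ : ∀ w, a (Q w) = 0 := by
    intro w
    have h1 := ha_add (Q w) (fun _ => a w)
    rw [ha_const] at h1
    have h2 : Q w + (fun _ => a w) = w := by simp [Q]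
    rw [h2] at h1
    linarith
  have hsum0 : ∀ w, a w = 0 → ∑ i, d i * w i = 0 := by
    intro w hw
    simp only [a] at hw
    rcases div_eq_zero_iff.1 hw with h | h
    · exact h
    · exact absurd h hDpos.ne'
  have ha_le : ∀ w, |a w| ≤ ‖w‖ := by
    intro w
    simp only [a]
    rw [abs_div, abs_of_pos hDpos, div_le_iff₀ hDpos, hD, Finset.mul_sum]
    refine (Finset.abs_sum_le_sum_abs _ _).trans (Finset.sum_le_sum fun i _ => ?_)
    rw [abs_mul, abs_of_pos (hd i), mul_comm]
    exact mul_le_mul_of_nonneg_right (norm_le_pi_norm w i) (hd i).le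
  have hQ_le : ∀ w, ‖Q w‖ ≤ 2 * ‖w‖ := by
    intro w
    have h1 : ‖(fun _ : Fin n => a w)‖ ≤ ‖w‖ :=
      (pi_norm_le_iff_of_nonneg (norm_nonneg _)).2 fun _ => ha_le w
    calc ‖Q w‖ ≤ ‖w‖ + ‖(fun _ : Fin n => a w)‖ := norm_sub_le _ _
      _ ≤ _ := by linarith
  set K := √D with hK
  set K' := ∑ i, (√(d i))⁻¹ with hK'
  have hK0 : 0 ≤ K := Real.sqrt_nonneg _
  have hK'0 : 0 ≤ K' := Finset.sum_nonneg fun i _ => inv_nonneg.2 (Real.sqrt_nonneg _)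
  let w : ℕ → Fin n → ℝ := fun k => Q (g^[k] z)
  have hw0 : Tendsto w atTop (nhds 0) := by
    have h1 := (hQc.tendsto (fun _ => c)).comp hc
    have h2 : Q (fun _ => c) = 0 := by
      funext i; simp [Q, ha_const]
    rwa [h2] at h1
  obtain ⟨δ, hδ, hδ2⟩ : ∃ δ > 0, 2 * K * K' * δ ≤ r - ρ := by
    refine ⟨(r - ρ) / (2 * K * K' + 1), div_pos (by linarith) (by positivity), ?_⟩
    rw [mul_div_assoc', div_le_iff₀ (by positivity)]
    nlinarith
  have hev := hw0.eventually (hder.def hδ)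
  have hstep : ∀ᶠ k in atTop, wN d (w (k + 1)) ≤ r * wN d (w k) := by
    filter_upwards [hev] with k hk
    have h1 : w (k + 1) = P *ᵥ (w k) + Q (g (w k) - P *ᵥ (w k)) := by
      have e1 : g^[k] z = w k + fun _ => a (g^[k] z) := by simp [w, Q]
      have e2 : g^[k + 1] z = g (w k) + fun _ => a (g^[k] z) := by
        rw [Function.iterate_succ_apply', ← htr, ← e1]
      have e3 : a (P *ᵥ (w k)) = 0 := haP _ (haQ _)
      have e4 : a (g (w k)) = a (g (w k) - P *ᵥ (w k)) := by
        have := ha_add (g (w k) - P *ᵥ (w k)) (P *ᵥ (w k))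
        rw [sub_add_cancel, e3, add_zero] at this
        exact this
      have e5 : a (g^[k + 1] z) = a (g (w k) - P *ᵥ (w k)) + a (g^[k] z) := by
        rw [e2, ha_add, ha_const, e4]
      funext i
      have e6 := congrFun e2 i
      simp only [Pi.add_apply] at e6
      change (g^[k + 1] z) i - a (g^[k + 1] z) = (P *ᵥ (w k)) i +
        ((g (w k) i - (P *ᵥ (w k)) i) - a (g (w k) - P *ᵥ (w k)))
      rw [e5, e6]; ring
    have h2 : wN d (Q (g (w k) - P *ᵥ (w k))) ≤ (r - ρ) * wN d (w k) := by
      have hN : 0 ≤ wN d (w k) := norm_nonneg _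
      calc wN d (Q (g (w k) - P *ᵥ (w k))) ≤ K * ‖Q (g (w k) - P *ᵥ (w k))‖ := wN_le d _ hd
        _ ≤ K * (2 * (δ * (K' * wN d (w k)))) := by
            refine mul_le_mul_of_nonneg_left ((hQ_le _).trans ?_) hK0
            refine mul_le_mul_of_nonneg_left (hk.trans ?_) (by norm_num)
            exact mul_le_mul_of_nonneg_left (le_wN d _ hd) hδ.le
        _ = (2 * K * K' * δ) * wN d (w k) := by ring
        _ ≤ _ := mul_le_mul_of_nonneg_right hδ2 hN
    rw [h1]
    have h3 := hcontr (w k) (hsum0 _ (haQ _))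
    have h4 := wN_add d (P *ᵥ (w k)) (Q (g (w k) - P *ᵥ (w k)))
    linarith
  obtain ⟨k0, hk0⟩ := eventually_atTop.1 hstep
  have hgeo : ∀ j, wN d (w (k0 + j)) ≤ r ^ j * wN d (w k0) := by
    intro j
    induction j with
    | zero => simp
    | succ j ih =>
      calc wN d (w (k0 + j + 1)) ≤ r * wN d (w (k0 + j)) := hk0 _ (Nat.le_add_right _ _)
        _ ≤ r * (r ^ j * wN d (w k0)) := mul_le_mul_of_nonneg_left ih hr0.le
        _ = _ := by ring
  have hosc : ∀ k, ‖g^[k] z - fun _ => c‖ ≤ 2 * ‖w k‖ := by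
    intro k
    have hiter : ∀ l, g^[l + k] z = g^[l] (g^[k] z) := fun l => Function.iterate_add_apply g l k z
    have hlim : ∀ i, Tendsto (fun l => (g^[l] (g^[k] z)) i) atTop (nhds c) := by
      intro i
      have h1 := (tendsto_pi_nhds.1 hc i).comp (tendsto_add_atTop_nat k)
      refine h1.congr fun l => ?_
      simp only [Function.comp, hiter]
    have hwi : ∀ i, |(g^[k] z) i - a (g^[k] z)| ≤ ‖w k‖ := fun i => norm_le_pi_norm (w k) i
    have hup : c ≤ a (g^[k] z) + ‖w k‖ := by
      refine le_of_tendsto' (hlim ⟨0, hn⟩) fun l => ?_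
      have : ∀ l, g^[l] (g^[k] z) ≤ fun _ => a (g^[k] z) + ‖w k‖ := by
        intro l
        induction l with
        | zero =>
          intro i
          have := (abs_le.1 (hwi i)).2
          simp only [Function.iterate_zero, id]
          linarith
        | succ l ih =>
          rw [Function.iterate_succ_apply', ← hconst]
          exact hmono ih
      exact this l _
    have hlo : a (g^[k] z) - ‖w k‖ ≤ c := by
      refine ge_of_tendsto' (hlim ⟨0, hn⟩) fun l => ?_
      have : ∀ l, (fun _ => a (g^[k] z) - ‖w k‖) ≤ g^[l] (g^[k] z) := by
        intro l
        induction l with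
        | zero =>
          intro i
          have := (abs_le.1 (hwi i)).1
          simp only [Function.iterate_zero, id]
          linarith
        | succ l ih =>
          rw [Function.iterate_succ_apply', ← hconst]
          exact hmono ih
      exact this l _
    refine (pi_norm_le_iff_of_nonneg (by positivity)).2 fun i => ?_
    have := abs_le.1 (hwi i)
    rw [Pi.sub_apply, Real.norm_eq_abs, abs_le]
    constructor <;> linarith
  refine ⟨2 * (K' * (wN d (w k0) / r ^ k0)), ?_⟩
  filter_upwards [eventually_ge_atTop k0] with k hk
  obtain ⟨j, rfl⟩ := Nat.exists_eq_add_of_le hk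
  refine (hosc _).trans ?_
  have h1 := le_wN d (w (k0 + j)) hd
  have h2 := mul_le_mul_of_nonneg_left (hgeo j) hK'0
  have h3 : 2 * (K' * (wN d (w k0) / r ^ k0)) * r ^ (k0 + j) = 2 * (K' * (r ^ j * wN d (w k0))) := by
    rw [pow_add]; field_simp
  rw [h3]
  linarith

lemma posum {n : ℕ} (a : Fin n → ℝ) (ha : ∀ j, 0 ≤ a j) (hex : ∃ j, 0 < a j) (x : Fin n → ℝ) :
    0 < ∑ j, a j * Real.exp (x j) := by
  obtain ⟨j, hj⟩ := hex
  exact Finset.sum_pos' (fun i _ => mul_nonneg (ha i) (Real.exp_pos _).le)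
    ⟨j, Finset.mem_univ j, mul_pos hj (Real.exp_pos _)⟩

lemma sum_mono_exp {n : ℕ} (a : Fin n → ℝ) (ha : ∀ j, 0 ≤ a j) (x y : Fin n → ℝ) (h : x ≤ y) :
    ∑ j, a j * Real.exp (x j) ≤ ∑ j, a j * Real.exp (y j) :=
  Finset.sum_le_sum fun j _ => mul_le_mul_of_nonneg_left (Real.exp_le_exp.2 (h j)) (ha j)

lemma sum_eq_exp {n : ℕ} (a : Fin n → ℝ) (ha : ∀ j, 0 ≤ a j) (x y : Fin n → ℝ) (h : x ≤ y)
    (he : ∑ j, a j * Real.exp (x j) = ∑ j, a j * Real.exp (y j)) (j : Fin n) (hj : 0 < a j) :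
    x j = y j := by
  have h1 := (Finset.sum_eq_sum_iff_of_le (fun j _ =>
    mul_le_mul_of_nonneg_left (Real.exp_le_exp.2 (h j)) (ha j))).1 he j (Finset.mem_univ j)
  exact Real.exp_injective (mul_left_cancel₀ hj.ne' h1)

lemma hots_mono {n : ℕ} (A : Matrix (Fin n) (Fin n) ℝ)
    (hA : ∀ i j, 0 ≤ A i j)
    (hrow : ∀ i, ∃ j, 0 < A i j) (hcol : ∀ j, ∃ i, 0 < A i j) : Monotone (hotsMap A) := by
  intro x y h i
  have h1 := Real.log_le_log (posum (fun j => A j i) (fun j => hA j i) (hcol i) x)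
    (sum_mono_exp (fun j => A j i) (fun j => hA j i) x y h)
  have h2 := Real.log_le_log (posum (fun j => A i j) (fun j => hA i j) (hrow i) (-y))
    (sum_mono_exp (fun j => A i j) (fun j => hA i j) (-y) (-x) (neg_le_neg h))
  simp only [Pi.neg_apply] at h2
  simp only [hotsMap]
  linarith

lemma hots_strict {n : ℕ} (A : Matrix (Fin n) (Fin n) ℝ)
    (hA : ∀ i j, 0 ≤ A i j)
    (hrow : ∀ i, ∃ j, 0 < A i j) (hcol : ∀ j, ∃ i, 0 < A i j)
    (x y : Fin n → ℝ) (h : x ≤ y) (i : Fin n) (he : hotsMap A x i = hotsMap A y i)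
    (j : Fin n) (hj : 0 < (A + Aᵀ) i j) : x j = y j := by
  have p1 := posum (fun j => A j i) (fun j => hA j i) (hcol i)
  have p2 := posum (fun j => A i j) (fun j => hA i j) (hrow i)
  have h1 := Real.log_le_log (p1 x) (sum_mono_exp (fun j => A j i) (fun j => hA j i) x y h)
  have h2 := Real.log_le_log (p2 (-y))
    (sum_mono_exp (fun j => A i j) (fun j => hA i j) (-y) (-x) (neg_le_neg h))
  have p2x := p2 (-x)
  have p2y := p2 (-y)
  simp only [Pi.neg_apply] at h2 p2x p2y
  simp only [hotsMap] at he
  have e1 : Real.log (∑ j, A j i * Real.exp (x j)) = Real.log (∑ j, A j i * Real.exp (y j)) := by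
    linarith
  have e2 : Real.log (∑ j, A i j * Real.exp (-(y j))) = Real.log (∑ j, A i j * Real.exp (-(x j))) := by
    linarith
  have e1' := Real.log_injOn_pos (p1 x) (p1 y) e1
  have e2' := Real.log_injOn_pos p2y p2x e2
  rcases (hA i j).lt_or_eq with h3 | h3
  · have := sum_eq_exp (fun j => A i j) (fun j => hA i j) (-y) (-x) (neg_le_neg h) e2' j h3
    simpa using this.symm
  · have h4 : 0 < A j i := by
      simpa [Matrix.add_apply, ← h3] using hj
    exact sum_eq_exp (fun j => A j i) (fun j => hA j i) x y h e1' j h4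

lemma hots_trans {n : ℕ} (A : Matrix (Fin n) (Fin n) ℝ)
    (hA : ∀ i j, 0 ≤ A i j)
    (hrow : ∀ i, ∃ j, 0 < A i j) (hcol : ∀ j, ∃ i, 0 < A i j) (x : Fin n → ℝ) (t : ℝ) :
    hotsMap A (x + fun _ => t) = hotsMap A x + fun _ => t := by
  funext i
  have p1 := posum (fun j => A j i) (fun j => hA j i) (hcol i) x
  have p2 := posum (fun j => A i j) (fun j => hA i j) (hrow i) (-x)
  simp only [Pi.neg_apply] at p2
  have e1 : ∑ j, A j i * Real.exp (x j + t)
      = (∑ j, A j i * Real.exp (x j)) * Real.exp t := by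
    rw [Finset.sum_mul]
    exact Finset.sum_congr rfl fun j _ => by rw [Real.exp_add]; ring
  have e2 : ∑ j, A i j * Real.exp (-(x j + t))
      = (∑ j, A i j * Real.exp (-(x j))) * Real.exp (-t) := by
    rw [Finset.sum_mul]
    exact Finset.sum_congr rfl fun j _ => by rw [neg_add, Real.exp_add]; ring
  simp only [hotsMap, Pi.add_apply] at e1 e2 ⊢
  rw [e1, e2, Real.log_mul p1.ne' (Real.exp_pos _).ne', Real.log_mul p2.ne' (Real.exp_pos _).ne',
    Real.log_exp, Real.log_exp]
  ring

lemma jac_apply {n : ℕ} (A : Matrix (Fin n) (Fin n) ℝ)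
    (hA : ∀ i j, 0 ≤ A i j)
    (hrow : ∀ i, ∃ j, 0 < A i j) (hcol : ∀ j, ∃ i, 0 < A i j) (v : Fin n → ℝ) (i j : Fin n) :
    hotsJacMatrix A v i j = (1 / 2) * (A j i * Real.exp (v j) / (∑ l, A l i * Real.exp (v l)) +
      A i j * Real.exp (-(v j)) / (∑ l, A i l * Real.exp (-(v l)))) := by
  have p1 := fun i => posum (fun j => A j i) (fun j => hA j i) (hcol i) v
  have p2 := fun i => posum (fun j => A i j) (fun j => hA i j) (hrow i) (-v)
  simp only [Pi.neg_apply] at p2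
  have d1 : (Matrix.diagonal fun i => ∑ l, A l i * Real.exp (v l))⁻¹
      = Matrix.diagonal fun i => (∑ l, A l i * Real.exp (v l))⁻¹ := by
    refine Matrix.inv_eq_right_inv ?_
    rw [Matrix.diagonal_mul_diagonal, ← Matrix.diagonal_one]
    congr 1
    funext i
    exact mul_inv_cancel₀ (p1 i).ne'
  have d2 : (Matrix.diagonal fun i => ∑ l, A i l * Real.exp (-(v l)))⁻¹
      = Matrix.diagonal fun i => (∑ l, A i l * Real.exp (-(v l)))⁻¹ := by
    refine Matrix.inv_eq_right_inv ?_
    rw [Matrix.diagonal_mul_diagonal, ← Matrix.diagonal_one]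
    congr 1
    funext i
    exact mul_inv_cancel₀ (p2 i).ne'
  unfold hotsJacMatrix
  rw [d1, d2]
  simp only [Matrix.smul_apply, Matrix.add_apply, Matrix.mul_diagonal, Matrix.diagonal_mul,
    Matrix.transpose_apply, smul_eq_mul]
  ring

lemma hots_deriv {n : ℕ} (A : Matrix (Fin n) (Fin n) ℝ)
    (hA : ∀ i j, 0 ≤ A i j)
    (hrow : ∀ i, ∃ j, 0 < A i j) (hcol : ∀ j, ∃ i, 0 < A i j) (v : Fin n → ℝ) :
    HasFDerivAt (hotsMap A) (Matrix.mulVecLin (hotsJacMatrix A v)).toContinuousLinearMap v := by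
  rw [hasFDerivAt_pi']
  intro i
  have p1 := posum (fun j => A j i) (fun j => hA j i) (hcol i) v
  have p2 := posum (fun j => A i j) (fun j => hA i j) (hrow i) (-v)
  simp only [Pi.neg_apply] at p2
  have hx : ∀ j, HasFDerivAt (fun x : Fin n → ℝ => x j)
      (ContinuousLinearMap.proj (R := ℝ) (φ := fun _ : Fin n => ℝ) j) v :=
    fun j => hasFDerivAt_apply j v
  have h1 := (HasFDerivAt.fun_sum (u := Finset.univ) (fun j _ => ((hx j).exp.const_mul (A j i)))).log p1.ne'
  have h2 := (HasFDerivAt.fun_sum (u := Finset.univ) (fun j _ => ((hx j).neg.exp.const_mul (A i j)))).log p2.ne'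
  have h3 := (h1.sub h2).const_mul (1 / 2 : ℝ)
  refine h3.congr_fderiv ?_
  refine ContinuousLinearMap.ext fun w => ?_
  simp only [ContinuousLinearMap.smul_apply, ContinuousLinearMap.sub_apply, _root_.sum_apply,
    ContinuousLinearMap.neg_apply, ContinuousLinearMap.comp_apply, ContinuousLinearMap.proj_apply,
    smul_eq_mul, LinearMap.coe_toContinuousLinearMap', Matrix.mulVecLin_apply, Matrix.mulVec,
    dotProduct, jac_apply A hA hrow hcol, Pi.neg_apply]
  rw [Finset.mul_sum, Finset.mul_sum, ← Finset.sum_sub_distrib, Finset.mul_sum]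
  refine Finset.sum_congr rfl fun j _ => ?_
  field_simp
  ring

lemma exists_fixed {n : ℕ} (A : Matrix (Fin n) (Fin n) ℝ)
    (hA : ∀ i j, 0 ≤ A i j)
    (hrow : ∀ i, ∃ j, 0 < A i j) (hcol : ∀ j, ∃ i, 0 < A i j)
    (hirr : ∀ i j, ∃ k : ℕ, 1 ≤ k ∧ 0 < (A ^ k) i j) : ∃ v, hotsMap A v = v := by
  rcases Nat.eq_zero_or_pos n with rfl | hn
  · exact ⟨0, by funext i; exact i.elim0⟩
  let i0 : Fin n := ⟨0, hn⟩
  let F : (Fin n → ℝ) → ℝ := fun x => ∑ i, ∑ j, A i j * Real.exp (x i - x j)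
  have hF : Continuous F := by fun_prop
  let S : Set (Fin n → ℝ) := {x | x i0 = 0 ∧ F x ≤ F 0}
  have hScl : IsClosed S :=
    (isClosed_eq (continuous_apply i0) continuous_const).inter
      (isClosed_le hF continuous_const)
  -- entries bound
  have hedge : ∀ i j, ∃ C : ℝ, 0 < A i j → ∀ x, F x ≤ F 0 → x i - x j ≤ C := by
    intro i j
    refine ⟨Real.log (F 0 / A i j), fun hij x hx => ?_⟩
    have h1 : A i j * Real.exp (x i - x j) ≤ F x := by
      have h2 := Finset.single_le_sum (f := fun j => A i j * Real.exp (x i - x j))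
        (fun j _ => mul_nonneg (hA i j) (Real.exp_pos _).le) (Finset.mem_univ j)
      have h3 := Finset.single_le_sum (f := fun i => ∑ j, A i j * Real.exp (x i - x j))
        (fun i _ => Finset.sum_nonneg fun j _ => mul_nonneg (hA i j) (Real.exp_pos _).le)
        (Finset.mem_univ i)
      exact h2.trans h3
    have h4 : Real.exp (x i - x j) ≤ F 0 / A i j := by
      rw [le_div_iff₀ hij]; linarith
    have := Real.log_le_log (Real.exp_pos _) h4
    rwa [Real.log_exp] at this
  have hpath : ∀ k i j, 0 < (A ^ k) i j → ∃ C : ℝ, ∀ x, F x ≤ F 0 → x i - x j ≤ C := by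
    intro k i j hk
    refine propagate A hA (fun k' l => ∃ C : ℝ, ∀ x, F x ≤ F 0 → x i - x l ≤ C) ?_ k i j
      ⟨0, fun x _ => by simp⟩ hk
    rintro k' l ⟨C, hC⟩ j hj
    obtain ⟨C', hC'⟩ := hedge l j
    exact ⟨C + C', fun x hx => by have := hC x hx; have := hC' hj x hx; linarith⟩
  have hall : ∀ i j, ∃ C : ℝ, ∀ x, F x ≤ F 0 → x i - x j ≤ C := fun i j => by
    obtain ⟨k, -, hk⟩ := hirr i j
    exact hpath k i j hk
  choose C hC using hall
  have hScpt : IsCompact S := by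
    refine (isCompact_Icc (a := fun i => -C i0 i) (b := fun i => C i i0)).of_isClosed_subset hScl ?_
    rintro x ⟨hx0, hx⟩
    refine ⟨fun i => ?_, fun i => ?_⟩
    · have := hC i0 i x hx
      rw [hx0] at this; simp only; linarith
    · have := hC i i0 x hx
      rw [hx0] at this; simp only; linarith
  obtain ⟨v, ⟨hv0, hvF⟩, hv⟩ := hScpt.exists_isMinOn ⟨0, rfl, le_rfl⟩ hF.continuousOn
  have hmin : ∀ y, F v ≤ F y := by
    intro y
    by_cases h : F y ≤ F 0
    · have h1 : F (fun i => y i - y i0) = F y := by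
        simp only [F, sub_sub_sub_cancel_right]
      have h2 := hv (show (fun i => y i - y i0) ∈ S from ⟨by simp, by rw [h1]; exact h⟩)
      have h3 : F v ≤ F (fun i => y i - y i0) := h2
      rwa [h1] at h3
    · push Not at h
      exact hvF.trans h.le
  refine ⟨v, ?_⟩
  funext p
  have hbal : ∑ j, A p j * Real.exp (v p - v j) = ∑ j, A j p * Real.exp (v j - v p) := by
    let e : Fin n → ℝ := Pi.single p 1
    let φ : ℝ → ℝ := fun t => ∑ i, ∑ j, A i j * Real.exp ((v i - v j) + t * (e i - e j))
    have hd : HasDerivAt φ (∑ i, ∑ j, A i j * (Real.exp ((v i - v j) + 0 * (e i - e j)) *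
        (1 * (e i - e j)))) 0 := by
      refine HasDerivAt.fun_sum fun i _ => HasDerivAt.fun_sum fun j _ => ?_
      exact ((((hasDerivAt_id (0:ℝ)).mul_const (e i - e j)).const_add (v i - v j)).exp).const_mul _
    have hloc : IsLocalMin φ 0 := by
      refine Eventually.of_forall fun t => ?_
      have h1 := hmin (fun i => v i + t * e i)
      have h2 : φ 0 = F v := by simp [φ, F]
      have h3 : φ t = F (fun i => v i + t * e i) := by
        simp only [φ, F]
        refine Finset.sum_congr rfl fun i _ => Finset.sum_congr rfl fun j _ => ?_
        congr 2; ring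
      rw [h2, h3]; exact h1
    have h0 := hloc.hasDerivAt_eq_zero hd
    have h4 : ∑ i, ∑ j, A i j * (Real.exp ((v i - v j) + 0 * (e i - e j)) * (1 * (e i - e j)))
        = (∑ i, ∑ j, e i * (A i j * Real.exp (v i - v j)))
          - ∑ i, ∑ j, e j * (A i j * Real.exp (v i - v j)) := by
      rw [← Finset.sum_sub_distrib]
      refine Finset.sum_congr rfl fun i _ => ?_
      rw [← Finset.sum_sub_distrib]
      refine Finset.sum_congr rfl fun j _ => ?_
      rw [zero_mul, add_zero]; ring
    rw [h4, Finset.sum_comm (f := fun i j => e j * (A i j * Real.exp (v i - v j)))] at h0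
    simp only [← Finset.mul_sum] at h0
    simp only [e, Pi.single_apply, ite_mul, one_mul, zero_mul, Finset.sum_ite_eq',
      Finset.mem_univ, if_true] at h0
    linarith
  have p1 := posum (fun j => A j p) (fun j => hA j p) (hcol p) v
  have p2 := posum (fun j => A p j) (fun j => hA p j) (hrow p) (-v)
  simp only [Pi.neg_apply] at p2
  have e1 : ∑ j, A p j * Real.exp (v p - v j)
      = Real.exp (v p) * ∑ j, A p j * Real.exp (-(v j)) := by
    rw [Finset.mul_sum]
    exact Finset.sum_congr rfl fun j _ => by rw [sub_eq_add_neg, Real.exp_add]; ring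
  have e2 : ∑ j, A j p * Real.exp (v j - v p)
      = Real.exp (-(v p)) * ∑ j, A j p * Real.exp (v j) := by
    rw [Finset.mul_sum]
    exact Finset.sum_congr rfl fun j _ => by rw [sub_eq_add_neg, Real.exp_add]; ring
  rw [e1, e2] at hbal
  have h5 := congrArg Real.log hbal
  rw [Real.log_mul (Real.exp_pos _).ne' p2.ne', Real.log_mul (Real.exp_pos _).ne' p1.ne',
    Real.log_exp, Real.log_exp] at h5
  simp only [hotsMap]
  linarith

/-- Convergence of the ideal HOTS algorithm: if `A` is irreducible and `A + Aᵀ` is primitive,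
the fixed point exists and the fixed point iteration converges linearly at rate `ρ₂ < 1`. -/
theorem idealHots_converges {n : ℕ} (A : Matrix (Fin n) (Fin n) ℝ)
    (hA : ∀ i j, 0 ≤ A i j)
    (hrow : ∀ i, ∃ j, 0 < A i j) (hcol : ∀ j, ∃ i, 0 < A i j)
    (hirr : ∀ i j, ∃ k : ℕ, 1 ≤ k ∧ 0 < (A ^ k) i j)
    (hprim : ∃ k : ℕ, 1 ≤ k ∧ ∀ i j, 0 < ((A + Aᵀ) ^ k) i j) :
    ∃ v : Fin n → ℝ, hotsMap A v = v ∧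
      secondEigRadius (hotsJacMatrix A v) < 1 ∧
      ∀ x : Fin n → ℝ, ∃ c : ℝ,
        Tendsto (fun k => (hotsMap A)^[k] x) atTop (nhds (v + fun _ => c)) ∧
        limsup (fun k : ℕ =>
            ‖(hotsMap A)^[k] x - (v + fun _ => c)‖ ^ (1 / (k : ℝ)))
          atTop ≤ secondEigRadius (hotsJacMatrix A v) := by
  obtain ⟨v, hv⟩ := exists_fixed A hA hrow hcol hirr
  obtain ⟨m, -, hm⟩ := hprim
  refine ⟨v, hv, ?_⟩
  have p1 := fun i => posum (fun j => A j i) (fun j => hA j i) (hcol i) v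
  have p2 := fun i => posum (fun j => A i j) (fun j => hA i j) (hrow i) (-v)
  simp only [Pi.neg_apply] at p2
  have hPij := jac_apply A hA hrow hcol v
  set P := hotsJacMatrix A v with hPdef
  have hB : ∀ i j, 0 ≤ (A + Aᵀ) i j := fun i j => add_nonneg (hA i j) (hA j i)
  have hP : ∀ i j, 0 ≤ P i j := by
    intro i j
    rw [hPij]
    have := hA i j
    have := hA j i
    have := p1 i
    have := p2 i
    positivity
  have hBP : ∀ i j, 0 < (A + Aᵀ) i j → 0 < P i j := by
    intro i j h
    rw [hPij]
    have h1 := hA i j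
    have h2 := hA j i
    have := p1 i
    have := p2 i
    rcases h1.lt_or_eq with h3 | h3
    · positivity
    · have h4 : 0 < A j i := by
        simpa [Matrix.add_apply, ← h3] using h
      positivity
  have hrowP : ∀ i, ∑ j, P i j = 1 := by
    intro i
    simp only [hPij]
    rw [← Finset.mul_sum, Finset.sum_add_distrib, ← Finset.sum_div, ← Finset.sum_div,
      div_self (p1 i).ne', div_self (p2 i).ne']
    norm_num
  let d : Fin n → ℝ := fun i => Real.exp (-(v i)) * ∑ l, A l i * Real.exp (v l)
  have hd : ∀ i, 0 < d i := fun i => mul_pos (Real.exp_pos _) (p1 i)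
  have hd2 : ∀ i, d i = Real.exp (v i) * ∑ l, A i l * Real.exp (-(v l)) := by
    intro i
    have h1 := congrFun hv i
    simp only [hotsMap] at h1
    apply Real.log_injOn_pos (hd i) (mul_pos (Real.exp_pos _) (p2 i))
    simp only [d]
    rw [Real.log_mul (Real.exp_pos _).ne' (p1 i).ne', Real.log_mul (Real.exp_pos _).ne' (p2 i).ne',
      Real.log_exp, Real.log_exp]
    linarith
  have hdP : ∀ i j, d i * P i j = (1 / 2) * (A j i * (Real.exp (-(v i)) * Real.exp (v j)) +
      A i j * (Real.exp (v i) * Real.exp (-(v j)))) := by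
    intro i j
    rw [hPij]
    have e1 : d i * (A j i * Real.exp (v j) / (∑ l, A l i * Real.exp (v l)))
        = A j i * (Real.exp (-(v i)) * Real.exp (v j)) := by
      have := (p1 i).ne'
      simp only [d]
      field_simp
    have e2 : d i * (A i j * Real.exp (-(v j)) / (∑ l, A i l * Real.exp (-(v l))))
        = A i j * (Real.exp (v i) * Real.exp (-(v j))) := by
      have := (p2 i).ne'
      rw [hd2]
      field_simp
    rw [← e1, ← e2]; ring
  have hsym : ∀ i j, d i * P i j = d j * P j i := by
    intro i j
    rw [hdP, hdP]; ring
  refine ⟨radius_lt_one P _ hP hrowP hB hBP m hm d hd hsym, fun x => ?_⟩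
  let g : (Fin n → ℝ) → (Fin n → ℝ) := fun z => hotsMap A (v + z) - v
  have hfd := fun y => hots_deriv A hA hrow hcol y
  have hfc : Continuous (hotsMap A) :=
    continuous_iff_continuousAt.2 fun y => (hfd y).continuousAt
  have hg : Continuous g := by fun_prop
  have hgm : Monotone g := fun a b h =>
    sub_le_sub_right (hots_mono A hA hrow hcol (add_le_add_right h v)) v
  have hgt : ∀ z (t : ℝ), g (z + fun _ => t) = g z + fun _ => t := by
    intro z t
    simp only [g]
    rw [← add_assoc, hots_trans A hA hrow hcol]
    abel
  have hg0 : g 0 = 0 := by simp [g, hv]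
  have hgs : ∀ a b, a ≤ b → ∀ i, g a i = g b i → ∀ j, 0 < (A + Aᵀ) i j → a j = b j := by
    intro a b h i he j hj
    have he' : hotsMap A (v + a) i = hotsMap A (v + b) i := by
      simpa [g] using he
    have := hots_strict A hA hrow hcol (v + a) (v + b) (add_le_add_right h v) i he' j hj
    simpa using this
  have hiter : ∀ k, (hotsMap A)^[k] x = v + g^[k] (x - v) := by
    intro k
    induction k with
    | zero => simp
    | succ k ih =>
      rw [Function.iterate_succ_apply', Function.iterate_succ_apply', ih]
      simp [g]
  obtain ⟨c, hc⟩ := global_conv g hg hgm hgt hg0 (A + Aᵀ) hB hgs m hm (x - v)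
  have hder : (fun w => g w - P *ᵥ w) =o[nhds 0] (fun w => w) := by
    have h1 := hasFDerivAt_iff_isLittleO_nhds_zero.1 (hfd v)
    refine h1.congr_left fun w => ?_
    simp only [g, hv, LinearMap.coe_toContinuousLinearMap', Matrix.mulVecLin_apply, ← hPdef]
  refine ⟨c, ?_, ?_⟩
  · have h1 := hc.const_add v
    simpa only [hiter] using h1
  · refine limsup_root_le _ (fun k => norm_nonneg _) _ (radius_nonneg P) fun r hr => ?_
    obtain ⟨C, hC⟩ := rate g hgm hgt hg0 (x - v) c hc P hrowP d hd hsym (secondEigRadius P)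
      (radius_nonneg P) (wN_contract P _ hP hrowP hB hBP m hm d hd hsym) hder r hr
    refine ⟨C, ?_⟩
    filter_upwards [hC] with k hk
    rw [hiter, add_sub_add_left_eq_sub]
    exact hk
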